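/- Let Γ be a reduced, non-ascending labeled graph with all labels positive, and let e, f be mobile edges of Γ with f ∉ {e, ē}. Then it is impossible that e can slide over f in Γ (yielding a reduced labeled graph Γ′) and that, in Γ′, f can then slide over e. -/

import Mathlib

/-! Labeled graphs in the sense of generalized Baumslag–Solitar theory. -/

structure LGraph (V E : Type) where
  o : E → V
  bar : E → E
  bar_bar : ∀ e, bar (bar e) = e
  bar_ne : ∀ e, bar e ≠ e
  lab : E → ℤ

namespace LGraph

variable {V E V' E' : Type}

/-- Terminal vertex of an oriented edge. -/
def t (G : LGraph V E) (e : E) : V := G.o (G.bar e)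

/-- All labels are positive. -/
def Positive (G : LGraph V E) : Prop := ∀ e : E, 0 < G.lab e

/-- No collapsible edge: every label-1 edge is a loop. -/
def Reduced (G : LGraph V E) : Prop := ∀ e : E, G.lab e = 1 → G.o e = G.t e

/-- An `n`-rose: one vertex and `n` pairs of oriented edges. -/
def IsRose (G : LGraph V E) (n : ℕ) : Prop :=
  Nat.card V = 1 ∧ Nat.card E = 2 * n

/-- Modulus of a single oriented edge: `λ(ē)/λ(e)`. -/
def qe (G : LGraph V E) (e : E) : ℚ := (G.lab (G.bar e) : ℚ) / (G.lab e : ℚ)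

/-- Modulus of an edge path. -/
def q (G : LGraph V E) (l : List E) : ℚ := (l.map G.qe).prod

/-- Consecutive edges match up. -/
def IsEdgePath (G : LGraph V E) (l : List E) : Prop :=
  List.Chain' (fun a b => G.t a = G.o b) l

/-- An `e`-edge path. -/
def IsEEdgePath (G : LGraph V E) (e : E) (l : List E) : Prop :=
  G.IsEdgePath l ∧
  (∀ a ∈ l, a ≠ e ∧ a ≠ G.bar e) ∧
  (∀ a ∈ l.head?, G.o a = G.o e) ∧
  ∀ i : Fin l.length, ∃ k : ℤ,
    (G.lab e : ℚ) * G.q (l.take i.1) = (k : ℚ) * (G.lab (l.get i) : ℚ)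

/-- A monotone cycle `(e₁,…,eₛ,e)`. -/
def IsMonotoneCycle (G : LGraph V E) (l : List E) (e : E) : Prop :=
  G.IsEEdgePath (G.bar e) l ∧
  G.t (l.getLastD e) = G.o e ∧
  ∃ k : ℤ, G.q (l ++ [e]) = (k : ℚ)

/-- A strict monotone cycle. -/
def IsStrictMonotoneCycle (G : LGraph V E) (l : List E) (e : E) : Prop :=
  G.IsMonotoneCycle l e ∧ G.q (l ++ [e]) ≠ 1

def HasStrictMonotoneCycle (G : LGraph V E) : Prop :=
  ∃ (l : List E) (e : E), G.IsStrictMonotoneCycle l e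

/-- A strict `e`-integer cycle. -/
def IsStrictIntegerCycle (G : LGraph V E) (e : E) (l : List E) : Prop :=
  G.IsEEdgePath e l ∧ l ≠ [] ∧
  G.t (l.getLastD e) = G.o (l.headD e) ∧
  (∃ k : ℤ, G.q l = (k : ℚ)) ∧ G.q l ≠ 1

/-- A mobile edge. -/
def Mobile (G : LGraph V E) (e : E) : Prop :=
  (∃ l, G.IsStrictMonotoneCycle l e ∨ G.IsStrictMonotoneCycle l (G.bar e)) ∨
  (∃ l, G.IsStrictIntegerCycle e l ∨ G.IsStrictIntegerCycle (G.bar e) l)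

/-- The single slide of `e` over `f` is permitted. -/
def CanSlide (G : LGraph V E) (e f : E) : Prop :=
  f ≠ e ∧ f ≠ G.bar e ∧ G.o f = G.o e ∧ G.lab f ∣ G.lab e

open Classical in
/-- The result of the single slide of `e` over `f`. -/
noncomputable def slide (G : LGraph V E) (e f : E) : LGraph V E where
  o := fun x => if x = e then G.t f else G.o x
  bar := G.bar
  bar_bar := G.bar_bar
  bar_ne := G.bar_ne
  lab := fun x => if x = e then G.lab e * G.lab (G.bar f) / G.lab f else G.lab x

/-- Successively slide `e` over the edges of a path. -/
noncomputable def slidePath : LGraph V E → E → List E → LGraph V E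
  | G, _, [] => G
  | G, e, f :: l => slidePath (G.slide e f) e l

/-- Each single slide in the successive slide of `e` over a path is permitted. -/
def CanSlidePath : LGraph V E → E → List E → Prop
  | _, _, [] => True
  | G, e, f :: l => G.CanSlide e f ∧ CanSlidePath (G.slide e f) e l

/-- Each single slide is permitted and each intermediate graph is reduced. -/
def GoodSlidePath : LGraph V E → E → List E → Prop
  | _, _, [] => True
  | G, e, f :: l => G.CanSlide e f ∧ (G.slide e f).Reduced ∧ GoodSlidePath (G.slide e f) e l

/-- Perform a finite sequence of single slides, given as pairs (slid edge, edge slid over). -/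
noncomputable def slideSeq : LGraph V E → List (E × E) → LGraph V E
  | G, [] => G
  | G, p :: rest => slideSeq (G.slide p.1 p.2) rest

/-- A sequence of permitted single slides, each sliding a mobile edge. -/
def MobileSlideSeq : LGraph V E → List (E × E) → Prop
  | _, [] => True
  | G, p :: rest => G.Mobile p.1 ∧ G.CanSlide p.1 p.2 ∧ MobileSlideSeq (G.slide p.1 p.2) rest

/-- Isomorphism of labeled graphs. -/
def Isom (G : LGraph V E) (G' : LGraph V' E') : Prop :=
  ∃ (φ : V → V') (Φ : E → E'),
    Function.Bijective φ ∧ Function.Bijective Φ ∧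
    (∀ x, G'.o (Φ x) = φ (G.o x)) ∧
    (∀ x, G'.bar (Φ x) = Φ (G.bar x)) ∧
    (∀ x, G'.lab (Φ x) = G.lab x)

open Classical in
/-- The result of the induction move at the loop `e` with multiplier `m`. -/
noncomputable def inductionMove (G : LGraph V E) (e : E) (m : ℤ) : LGraph V E where
  o := G.o
  bar := G.bar
  bar_bar := G.bar_bar
  bar_ne := G.bar_ne
  lab := fun x => if x ≠ e ∧ x ≠ G.bar e ∧ G.o x = G.o e then m * G.lab x else G.lab x

/-- `G'` is obtained from `G` by a single slide move (up to isomorphism). -/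
def IsSlideMove (G : LGraph V E) (G' : LGraph V' E') : Prop :=
  ∃ e f, G.CanSlide e f ∧ Isom G' (G.slide e f)

/-- `G'` is obtained from `G` by a (forward) induction move. -/
def IsInductionMove (G : LGraph V E) (G' : LGraph V' E') : Prop :=
  ∃ (e : E) (m : ℤ), G.o e = G.t e ∧ G.lab e = 1 ∧ 1 ≤ m ∧ m ∣ G.lab (G.bar e) ∧
    Isom G' (G.inductionMove e m)

/-- `G'` is obtained from `G` by an A-move. -/
def IsAMove (G : LGraph V E) (G' : LGraph V' E') : Prop :=
  ∃ (e d : E) (e' : E') (φ : V → V') (Φ : E → E'),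
    G.o e = G.t e ∧ G.lab e = 1 ∧ G.lab (G.bar e) ≠ 1 ∧
    G.o d = G.o e ∧ G.t d ≠ G.o e ∧
    G.lab d ≠ 1 ∧ G.lab (G.bar d) ≠ 1 ∧ G.lab d ∣ G.lab (G.bar e) ∧
    (∀ x : E, G.o x = G.o e → x = e ∨ x = G.bar e ∨ x = d) ∧
    G'.o e' = φ (G.t d) ∧ G'.t e' = φ (G.t d) ∧
    G'.lab e' = G.lab (G.bar d) ∧
    G'.lab (G'.bar e') = G.lab (G.bar d) * G.lab (G.bar e) ∧
    (∀ w₁ w₂ : V, w₁ ≠ G.o e → w₂ ≠ G.o e → φ w₁ = φ w₂ → w₁ = w₂) ∧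
    (∀ v' : V', ∃ w : V, w ≠ G.o e ∧ φ w = v') ∧
    (∀ x : E, x ≠ e → x ≠ G.bar e → x ≠ d → x ≠ G.bar d →
      Φ x ≠ e' ∧ Φ x ≠ G'.bar e' ∧
      G'.o (Φ x) = φ (G.o x) ∧ G'.bar (Φ x) = Φ (G.bar x) ∧ G'.lab (Φ x) = G.lab x) ∧
    (∀ x y : E, x ≠ e → x ≠ G.bar e → x ≠ d → x ≠ G.bar d →
      y ≠ e → y ≠ G.bar e → y ≠ d → y ≠ G.bar d → Φ x = Φ y → x = y) ∧
    (∀ y : E', y ≠ e' → y ≠ G'.bar e' →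
      ∃ x : E, x ≠ e ∧ x ≠ G.bar e ∧ x ≠ d ∧ x ≠ G.bar d ∧ Φ x = y)

/-- A strict ascending loop: a loop with `λ(e) = 1 ≠ λ(ē)`. -/
def HasStrictAscendingLoop (G : LGraph V E) : Prop :=
  ∃ e : E, G.o e = G.t e ∧ G.lab e = 1 ∧ G.lab (G.bar e) ≠ 1

end LGraph

/-- A labeled graph with its vertex and edge types bundled. -/
structure BGraph where
  V : Type
  E : Type
  G : LGraph V E

/-- An elementary deformation move: a slide, an induction move or its inverse,
or an A-move or its inverse. -/
def BGraph.ElemMove (X Y : BGraph) : Prop :=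
  LGraph.IsSlideMove X.G Y.G ∨ LGraph.IsInductionMove X.G Y.G ∨
  LGraph.IsInductionMove Y.G X.G ∨ LGraph.IsAMove X.G Y.G ∨ LGraph.IsAMove Y.G X.G

/-- A finite sequence of elementary moves with all intermediate graphs reduced. -/
def BGraph.MoveSeq : BGraph → BGraph → Prop :=
  Relation.ReflTransGen (fun X Y => X.ElemMove Y ∧ Y.G.Reduced)

/-- A reduced labeled graph is non-ascending if no reduced labeled graph obtained from it
by slide, induction and A-moves (all intermediate graphs reduced) contains a
strict ascending loop. -/
def LGraph.NonAscending {V E : Type} (G : LGraph V E) : Prop :=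
  ∀ Y : BGraph, BGraph.MoveSeq ⟨V, E, G⟩ Y → ¬ Y.G.HasStrictAscendingLoop

/-! If `e` slides over `f` and then `f` slides over `e`, then `f` is a loop and `λ(f̄) ∣ λ(f)`.
Now let `g` be a loop with `λ(g) = k λ(ḡ)` and `k ≠ 1`. Either `ḡ` is already a strict ascending
loop, or an inverse A-move at `g` splits one off, with labels `1` and `k`. Hence `λ(f) = λ(f̄)` in a
non-ascending graph.

Such a balanced loop is immobile: a strict monotone or integer cycle would slide it around a closed
path through reduced graphs, keeping `λ(f̄)` and multiplying `λ(f)` by an integer `k ≠ 1`, and the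
previous paragraph, applied to the last graph, gives `k = 1`. -/

namespace LGraph

attribute [ext] LGraph
attribute [simp] bar_bar bar_ne

variable {V E V' E' : Type} {G : LGraph V E} {H : LGraph V' E'} {a e f g x : E} {k : ℤ}
  {l : List E}

theorem bar_involutive (G : LGraph V E) : Function.Involutive G.bar := G.bar_bar

@[simp]
theorem t_bar (G : LGraph V E) (e : E) : G.t (G.bar e) = G.o e := by
  rw [t, bar_bar]

theorem Isom.refl (G : LGraph V E) : Isom G G :=
  ⟨id, id, Function.bijective_id, Function.bijective_id,
    fun _ => rfl, fun _ => rfl, fun _ => rfl⟩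

theorem q_cons (G : LGraph V E) (a : E) (l : List E) : G.q (a :: l) = G.qe a * G.q l := by
  simp [q]

theorem Positive.qe_pos (hpos : G.Positive) (a : E) : 0 < G.qe a :=
  div_pos (Int.cast_pos.2 (hpos _)) (Int.cast_pos.2 (hpos _))

/-! ### Non-ascending graphs -/

theorem NonAscending.not_hasStrictAscendingLoop (hG : G.NonAscending) :
    ¬ G.HasStrictAscendingLoop :=
  hG ⟨V, E, G⟩ Relation.ReflTransGen.refl

theorem NonAscending.of_elemMove (hG : G.NonAscending)
    (hmove : BGraph.ElemMove ⟨V, E, G⟩ ⟨V', E', H⟩) (hH : H.Reduced) : H.NonAscending :=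
  fun Z hZ => hG Z (Relation.ReflTransGen.head ⟨hmove, hH⟩ hZ)

theorem NonAscending.slide (hG : G.NonAscending) (hslide : G.CanSlide e f)
    (hred : (G.slide e f).Reduced) : (G.slide e f).NonAscending :=
  hG.of_elemMove (Or.inl ⟨e, f, hslide, Isom.refl _⟩) hred

theorem NonAscending.of_isAMove (hG : G.NonAscending) (hmove : IsAMove H G) (hH : H.Reduced) :
    H.NonAscending :=
  hG.of_elemMove (Or.inr (Or.inr (Or.inr (Or.inr hmove)))) hH

/-! ### The inverse A-move at a loop -/

open Classical in
/-- The result of the inverse A-move at a loop `g` with `λ(g) = k λ(ḡ)`. The loop is moved to a new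
vertex `none`, where `ḡ` gets the label `1` and `g` the label `k`. The new edge `Sum.inr true`
leads from `none` to the old vertex; its labels are `k` at `none` and `λ(ḡ)` at the old vertex. -/
noncomputable def expandLoop (G : LGraph V E) (g : E) (k : ℤ) :
    LGraph (Option V) (E ⊕ Bool) where
  o := Sum.elim (fun x => if x = G.bar g ∨ x = g then none else some (G.o x))
    (fun i => if i = true then none else some (G.o g))
  bar := Sum.map G.bar not
  bar_bar := by rintro (x | i) <;> simp
  bar_ne := by rintro (x | i) <;> simp
  lab := Sum.elim (fun x => if x = g then k else if x = G.bar g then 1 else G.lab x)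
    (fun i => if i = true then k else G.lab (G.bar g))

theorem hasStrictAscendingLoop_expandLoop (hk : k ≠ 1) :
    (G.expandLoop g k).HasStrictAscendingLoop :=
  ⟨Sum.inl (G.bar g), by simp [expandLoop, t], by simp [expandLoop], by simp [expandLoop, hk]⟩

theorem Reduced.expandLoop (hG : G.Reduced) (hk : k ≠ 1) (hb : G.lab (G.bar g) ≠ 1) :
    (G.expandLoop g k).Reduced := by
  rintro (x | (_ | _)) hx
  · by_cases hxg : x = G.bar g ∨ x = g
    · rcases hxg with rfl | rfl <;> simp [LGraph.expandLoop, t]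
    · have hbar : ¬ (G.bar x = G.bar g ∨ G.bar x = g) := by
        rwa [G.bar_involutive.injective.eq_iff, G.bar_involutive.eq_iff, or_comm]
      have hlab : G.lab x = 1 := by
        simpa [LGraph.expandLoop, not_or.1 hxg] using hx
      simpa [LGraph.expandLoop, t, hxg, hbar] using hG x hlab
  · exact absurd hx (by simpa [LGraph.expandLoop] using hb)
  · exact absurd hx (by simpa [LGraph.expandLoop] using hk)

theorem isAMove_expandLoop (hloop : G.o g = G.t g) (hlab : G.lab g = G.lab (G.bar g) * k)
    (hk : k ≠ 1) (hb : G.lab (G.bar g) ≠ 1) : IsAMove (G.expandLoop g k) G := by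
  let X := G.expandLoop g k
  let φ : Option V → V := fun v => v.getD (G.o g)
  let Φ : E ⊕ Bool → E := Sum.elim id fun _ => g
  have new_vertex : X.o (Sum.inl (G.bar g)) = none := by simp [X, expandLoop]
  have edges_at_new_vertex : ∀ y, X.o y = X.o (Sum.inl (G.bar g)) →
      y = Sum.inl (G.bar g) ∨ y = X.bar (Sum.inl (G.bar g)) ∨ y = Sum.inr true := by
    rintro (x | (_ | _)) <;> simp [X, expandLoop, or_iff_not_imp_left]
  have vertex_injective : ∀ v w, v ≠ X.o (Sum.inl (G.bar g)) → w ≠ X.o (Sum.inl (G.bar g)) →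
      φ v = φ w → v = w := by
    rw [new_vertex]
    rintro (_ | v) (_ | w) <;> simp [φ]
  have edge_preserved : ∀ y, y ≠ Sum.inl (G.bar g) → y ≠ X.bar (Sum.inl (G.bar g)) →
      y ≠ Sum.inr true → y ≠ X.bar (Sum.inr true) →
      Φ y ≠ G.bar g ∧ Φ y ≠ G.bar (G.bar g) ∧
        G.o (Φ y) = φ (X.o y) ∧ G.bar (Φ y) = Φ (X.bar y) ∧ G.lab (Φ y) = X.lab y := by
    rintro (x | (_ | _)) <;> simp +contextual [X, Φ, φ, expandLoop]
  have edge_injective : ∀ y z, y ≠ Sum.inl (G.bar g) → y ≠ X.bar (Sum.inl (G.bar g)) →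
      y ≠ Sum.inr true → y ≠ X.bar (Sum.inr true) →
      z ≠ Sum.inl (G.bar g) → z ≠ X.bar (Sum.inl (G.bar g)) →
      z ≠ Sum.inr true → z ≠ X.bar (Sum.inr true) → Φ y = Φ z → y = z := by
    rintro (x | (_ | _)) (y | (_ | _)) <;> simp [X, Φ, expandLoop]
  refine ⟨Sum.inl (G.bar g), Sum.inr true, G.bar g, φ, Φ, ?_, ?_, ?_, ?_, ?_, ?_, ?_, ?_,
    edges_at_new_vertex, ?_, ?_, ?_, ?_, vertex_injective,
    fun v => ⟨some v, by simp [expandLoop], rfl⟩, edge_preserved, edge_injective,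
    fun x hx hx' => ⟨Sum.inl x, by simpa using hx, by simpa [expandLoop] using hx', by simp,
      by simp [expandLoop], rfl⟩⟩
  all_goals simp [φ, expandLoop, t, hk, hb, hlab, show G.o (G.bar g) = G.o g from hloop.symm]

theorem NonAscending.lab_eq_lab_bar (hna : G.NonAscending) (hred : G.Reduced)
    (hloop : G.o g = G.t g) (hdvd : G.lab (G.bar g) ∣ G.lab g) :
    G.lab g = G.lab (G.bar g) := by
  obtain ⟨k, hk⟩ := hdvd
  by_contra hne
  have hk1 : k ≠ 1 := by
    rintro rfl
    exact hne (by simpa using hk)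
  by_cases hb : G.lab (G.bar g) = 1
  · exact hna.not_hasStrictAscendingLoop
      ⟨G.bar g, by rw [t_bar]; exact hloop.symm, hb, by rwa [bar_bar, ← hb]⟩
  · exact (hna.of_isAMove (isAMove_expandLoop hloop hk hk1 hb)
      (hred.expandLoop hk1 hb)).not_hasStrictAscendingLoop (hasStrictAscendingLoop_expandLoop hk1)

/-! ### Single slides -/

@[simp]
theorem slide_bar (G : LGraph V E) (e f x : E) : (G.slide e f).bar x = G.bar x := rfl

@[simp]
theorem slide_o_self (G : LGraph V E) (e f : E) : (G.slide e f).o e = G.t f := by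
  simp [slide]

theorem slide_o_of_ne (G : LGraph V E) (f : E) (hx : x ≠ e) : (G.slide e f).o x = G.o x := by
  simp [slide, hx]

theorem slide_t_of_ne (G : LGraph V E) (f : E) (hx : x ≠ G.bar e) :
    (G.slide e f).t x = G.t x :=
  G.slide_o_of_ne f (mt G.bar_involutive.eq_iff.1 hx)

theorem slide_lab_of_ne (G : LGraph V E) (f : E) (hx : x ≠ e) :
    (G.slide e f).lab x = G.lab x := by
  simp [slide, hx]

theorem slide_lab_bar_of_ne (G : LGraph V E) (f : E) (hx : x ≠ G.bar e) :
    (G.slide e f).lab (G.bar x) = G.lab (G.bar x) :=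
  G.slide_lab_of_ne f (mt G.bar_involutive.eq_iff.1 hx)

theorem slide_q (G : LGraph V E) (f : E) (hl : ∀ a ∈ l, a ≠ e ∧ a ≠ G.bar e) :
    (G.slide e f).q l = G.q l := by
  refine congrArg List.prod (List.map_congr_left fun a ha => ?_)
  rw [qe, qe, slide_bar, G.slide_lab_of_ne f (hl a ha).1, G.slide_lab_bar_of_ne f (hl a ha).2]

theorem CanSlide.cast_slide_lab_self (h : G.CanSlide e f) :
    ((G.slide e f).lab e : ℚ) = G.lab e * G.qe f := by
  have hdvd : G.lab f ∣ G.lab e * G.lab (G.bar f) := h.2.2.2.mul_right _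
  simp [slide, Int.cast_div_charZero hdvd, qe, mul_div_assoc]

theorem CanSlide.lab_bar_dvd_slide_lab (h : G.CanSlide e f) :
    G.lab (G.bar f) ∣ (G.slide e f).lab e := by
  have hlab : (G.slide e f).lab e = G.lab e / G.lab f * G.lab (G.bar f) := by
    simp [slide, Int.mul_ediv_assoc' _ h.2.2.2]
  exact hlab ▸ dvd_mul_left _ _

theorem Positive.slide (hpos : G.Positive) (h : G.CanSlide e f) : (G.slide e f).Positive := by
  intro x
  by_cases hx : x = e
  · subst hx
    have hq : (0 : ℚ) < (G.slide x f).lab x := by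
      rw [h.cast_slide_lab_self]
      exact mul_pos (Int.cast_pos.2 (hpos x)) (hpos.qe_pos f)
    exact_mod_cast hq
  · rw [G.slide_lab_of_ne f hx]
    exact hpos x

theorem slide_eq_self (ht : G.t f = G.o e) (hf : G.lab f = 1) (hfbar : G.lab (G.bar f) = 1) :
    G.slide e f = G := by
  ext x
  · by_cases hx : x = e <;> simp [slide, hx, ht]
  · rfl
  · by_cases hx : x = e <;> simp [slide, hx, hf, hfbar]

/-! ### Slides along an edge path -/

theorem IsEEdgePath.canSlide (h : G.IsEEdgePath g (a :: l)) : G.CanSlide g a := by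
  obtain ⟨-, hne, ho, hdvd⟩ := h
  obtain ⟨k, hk⟩ := hdvd ⟨0, by simp⟩
  have hlab : G.lab g = k * G.lab a := by
    simp only [List.take_zero, q, List.map_nil, List.prod_nil, mul_one, List.get_eq_getElem,
      List.getElem_cons_zero] at hk
    exact_mod_cast hk
  exact ⟨(hne a (by simp)).1, (hne a (by simp)).2, ho a (by simp), hlab ▸ dvd_mul_left _ _⟩

theorem IsEEdgePath.slide (h : G.IsEEdgePath g (a :: l)) : (G.slide g a).IsEEdgePath g l := by
  have hslide := h.canSlide
  obtain ⟨hpath, hne, -, hdvd⟩ := h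
  obtain ⟨hhead, htail⟩ := List.isChain_cons.1 hpath
  have hne' : ∀ b ∈ l, b ≠ g ∧ b ≠ G.bar g := fun b hb => hne b (List.mem_cons_of_mem a hb)
  refine ⟨?_, hne', fun b hb => ?_, fun i => ?_⟩
  · refine htail.imp_of_mem_imp fun b c hb hc hbc => ?_
    rwa [G.slide_t_of_ne a (hne' b hb).2, G.slide_o_of_ne a (hne' c hc).1]
  · rw [slide_o_self, hhead b hb, G.slide_o_of_ne a (hne' b (List.mem_of_mem_head? hb)).1]
  · obtain ⟨k, hk⟩ := hdvd i.succ
    refine ⟨k, ?_⟩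
    rw [hslide.cast_slide_lab_self, G.slide_q a fun b hb => hne' b (List.mem_of_mem_take hb),
      G.slide_lab_of_ne a (hne' _ (List.get_mem l i)).1, mul_assoc, ← q_cons]
    exact hk

theorem IsEEdgePath.cast_slidePath_lab_self (h : G.IsEEdgePath g l) :
    ((G.slidePath g l).lab g : ℚ) = G.lab g * G.q l := by
  induction l generalizing G with
  | nil => simp [slidePath, q]
  | cons a l ih =>
    have hne : ∀ b ∈ l, b ≠ g ∧ b ≠ G.bar g := h.slide.2.1
    rw [slidePath, ih h.slide, h.canSlide.cast_slide_lab_self, G.slide_q a hne, q_cons, mul_assoc]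

theorem IsEEdgePath.slidePath_o_self (h : G.IsEEdgePath g l) (hx : G.t x = G.o g) :
    (G.slidePath g l).o g = G.t (l.getLastD x) := by
  induction l generalizing G x with
  | nil => exact hx.symm
  | cons a l ih =>
    have hlast : l.getLastD a ≠ G.bar g := (h.2.1 _ List.getLastD_mem_cons).2
    rw [slidePath, ih h.slide (x := a) ?_, List.getLastD_cons, G.slide_t_of_ne a hlast]
    rw [slide_o_self, G.slide_t_of_ne a h.canSlide.2.1]

theorem slidePath_bar (G : LGraph V E) (g : E) (l : List E) : (G.slidePath g l).bar = G.bar := by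
  induction l generalizing G with
  | nil => rfl
  | cons _ _ ih => exact ih _

theorem slidePath_o_of_ne (G : LGraph V E) (l : List E) (hx : x ≠ g) :
    (G.slidePath g l).o x = G.o x := by
  induction l generalizing G with
  | nil => rfl
  | cons a l ih => rw [slidePath, ih, G.slide_o_of_ne a hx]

theorem slidePath_lab_of_ne (G : LGraph V E) (l : List E) (hx : x ≠ g) :
    (G.slidePath g l).lab x = G.lab x := by
  induction l generalizing G with
  | nil => rfl
  | cons a l ih => rw [slidePath, ih, G.slide_lab_of_ne a hx]

theorem GoodSlidePath.reduced (h : G.GoodSlidePath g l) (hred : G.Reduced) :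
    (G.slidePath g l).Reduced := by
  induction l generalizing G with
  | nil => exact hred
  | cons _ _ ih => exact ih h.2.2 h.2.1

theorem GoodSlidePath.nonAscending (h : G.GoodSlidePath g l) (hna : G.NonAscending) :
    (G.slidePath g l).NonAscending := by
  induction l generalizing G with
  | nil => exact hna
  | cons _ _ ih => exact ih h.2.2 (hna.slide h.1 h.2.1)

/-! ### Edges of label one -/

/-- Outside `{g, ḡ}`, every edge of label `1` is a loop with both labels `1`. This holds in reduced
non-ascending graphs; unlike these two conditions, it visibly survives slides of `g`. -/
def UnitEdgesTrivialOff (G : LGraph V E) (g : E) : Prop :=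
  ∀ a, a ≠ g → a ≠ G.bar g → G.lab a = 1 → G.o a = G.t a ∧ G.lab (G.bar a) = 1

theorem NonAscending.unitEdgesTrivialOff (hna : G.NonAscending) (hred : G.Reduced) (g : E) :
    G.UnitEdgesTrivialOff g := by
  intro a _ _ ha
  refine ⟨hred a ha, ?_⟩
  by_contra hbar
  exact hna.not_hasStrictAscendingLoop ⟨a, hred a ha, ha, hbar⟩

theorem UnitEdgesTrivialOff.slide (h : G.UnitEdgesTrivialOff g) (f : E) :
    (G.slide g f).UnitEdgesTrivialOff g := by
  intro a hag hagbar ha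
  rw [G.slide_lab_of_ne f hag] at ha
  rw [G.slide_o_of_ne f hag, G.slide_t_of_ne f hagbar, slide_bar, G.slide_lab_bar_of_ne f hagbar]
  exact h a hag hagbar ha

theorem UnitEdgesTrivialOff.reduced (h : G.UnitEdgesTrivialOff g) (hb : G.lab (G.bar g) ≠ 1)
    (hg : G.lab g = 1 → G.o g = G.t g) : G.Reduced := by
  intro a ha
  by_cases hag : a = g
  · exact hag ▸ hg (hag ▸ ha)
  · have hagbar : a ≠ G.bar g := by
      rintro rfl
      exact hb ha
    exact (h a hag hagbar ha).1

theorem UnitEdgesTrivialOff.slidePath_eq_self (h : G.UnitEdgesTrivialOff g) (hpos : G.Positive)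
    (hg : G.lab g = 1) (hl : G.IsEEdgePath g l) : G.slidePath g l = G := by
  induction l with
  | nil => rfl
  | cons a l ih =>
    obtain ⟨hag, hagbar, ho, hdvd⟩ := hl.canSlide
    have ha : G.lab a = 1 := Int.eq_one_of_dvd_one (hpos a).le (hg ▸ hdvd)
    obtain ⟨hloop, hbar⟩ := h a hag hagbar ha
    have hself : G.slide g a = G := slide_eq_self (hloop.symm.trans ho) ha hbar
    rw [slidePath, hself]
    exact ih (hself ▸ hl.slide)

/- If an intermediate graph has `λ(g) = 1`, the remaining slides do nothing, so `g` has already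
reached its final position, where it is a loop. -/
theorem UnitEdgesTrivialOff.goodSlidePath (h : G.UnitEdgesTrivialOff g) (hpos : G.Positive)
    (hb : G.lab (G.bar g) ≠ 1) (hl : G.IsEEdgePath g l) (hend : (G.slidePath g l).o g = G.t g) :
    G.GoodSlidePath g l := by
  induction l generalizing G with
  | nil => trivial
  | cons a l ih =>
    have hslide := hl.canSlide
    have hunit := h.slide a
    have hpos' := hpos.slide hslide
    have hb' : (G.slide g a).lab (G.bar g) ≠ 1 := by
      rwa [G.slide_lab_of_ne a (G.bar_ne g)]
    have ht : (G.slide g a).t g = G.t g := G.slide_t_of_ne a (G.bar_ne g).symm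
    have hend' : ((G.slide g a).slidePath g l).o g = (G.slide g a).t g := hend.trans ht.symm
    refine ⟨hslide, hunit.reduced hb' fun hg => ?_, ih hunit hpos' hb' hl.slide hend'⟩
    rw [← hend', hunit.slidePath_eq_self hpos' hg hl.slide]

/-! ### Balanced loops -/

/-- A loop whose two labels agree, i.e. a loop of modulus `1`. -/
def IsBalancedLoop (G : LGraph V E) (g : E) : Prop :=
  G.o g = G.t g ∧ G.lab g = G.lab (G.bar g)

theorem IsBalancedLoop.bar (hg : G.IsBalancedLoop g) : G.IsBalancedLoop (G.bar g) :=
  ⟨by rw [t_bar]; exact hg.1.symm, by rw [bar_bar]; exact hg.2.symm⟩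

theorem IsBalancedLoop.q_eq_one (hg : G.IsBalancedLoop g) (hpos : G.Positive) (hred : G.Reduced)
    (hna : G.NonAscending) (hl : G.IsEEdgePath g l) (hclosed : (G.slidePath g l).o g = G.o g)
    (hk : G.q l = k) : G.q l = 1 := by
  have hne : G.lab g ≠ 0 := (hpos g).ne'
  have hlab : (G.slidePath g l).lab g = G.lab g * k := by
    exact_mod_cast hk ▸ hl.cast_slidePath_lab_self
  have hunit := hna.unitEdgesTrivialOff hred g
  suffices h : (G.slidePath g l).lab g = G.lab g by
    rw [hk, (mul_eq_left₀ hne).1 (hlab.symm.trans h), Int.cast_one]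
  by_cases hb : G.lab (G.bar g) = 1
  · rw [hunit.slidePath_eq_self hpos (hg.2.trans hb) hl]
  · have hgood := hunit.goodSlidePath hpos hb hl (hclosed.trans hg.1)
    have hlabbar : (G.slidePath g l).lab ((G.slidePath g l).bar g) = G.lab g := by
      rw [slidePath_bar, G.slidePath_lab_of_ne l (G.bar_ne g), hg.2]
    have hloop : (G.slidePath g l).o g = (G.slidePath g l).t g := by
      rw [hclosed, t, slidePath_bar, G.slidePath_o_of_ne l (G.bar_ne g)]
      exact hg.1
    have hdvd : (G.slidePath g l).lab ((G.slidePath g l).bar g) ∣ (G.slidePath g l).lab g := by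
      rw [hlabbar, hlab]
      exact dvd_mul_right _ _
    exact ((hgood.nonAscending hna).lab_eq_lab_bar (hgood.reduced hred) hloop hdvd).trans hlabbar

theorem IsBalancedLoop.not_isStrictIntegerCycle (hg : G.IsBalancedLoop g) (hpos : G.Positive)
    (hred : G.Reduced) (hna : G.NonAscending) : ¬ G.IsStrictIntegerCycle g l := by
  rintro ⟨hl, hnil, hend, ⟨k, hk⟩, hq⟩
  have hhead : G.o (l.headD g) = G.o g := by
    obtain ⟨a, l, rfl⟩ := List.exists_cons_of_ne_nil hnil
    exact hl.canSlide.2.2.1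
  have hclosed := (hl.slidePath_o_self hg.1.symm).trans (hend.trans hhead)
  exact hq (hg.q_eq_one hpos hred hna hl hclosed hk)

theorem IsBalancedLoop.not_isStrictMonotoneCycle (hg : G.IsBalancedLoop g) (hpos : G.Positive)
    (hred : G.Reduced) (hna : G.NonAscending) : ¬ G.IsStrictMonotoneCycle l g := by
  rintro ⟨⟨hl, hend, k, hk⟩, hq⟩
  have hqe : G.qe g = 1 := by
    rw [qe, ← hg.2, div_self (Int.cast_ne_zero.2 (hpos g).ne')]
  have hql : G.q (l ++ [g]) = G.q l := by simp [q, hqe]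
  have hclosed := (hl.slidePath_o_self rfl).trans (hend.trans hg.1)
  exact hq (hql.trans (hg.bar.q_eq_one hpos hred hna hl hclosed (hql.symm.trans hk)))

theorem IsBalancedLoop.not_mobile (hg : G.IsBalancedLoop g) (hpos : G.Positive)
    (hred : G.Reduced) (hna : G.NonAscending) : ¬ G.Mobile g := by
  rintro (⟨l, h | h⟩ | ⟨l, h | h⟩)
  · exact hg.not_isStrictMonotoneCycle hpos hred hna h
  · exact hg.bar.not_isStrictMonotoneCycle hpos hred hna h
  · exact hg.not_isStrictIntegerCycle hpos hred hna h
  · exact hg.bar.not_isStrictIntegerCycle hpos hred hna h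

end LGraph

theorem stmt8_general {V E : Type} (G : LGraph V E) (hpos : G.Positive) (hred : G.Reduced)
    (hna : G.NonAscending) (e f : E) (hmf : G.Mobile f) :
    ¬ (G.CanSlide e f ∧ (G.slide e f).CanSlide f e) := by
  rintro ⟨hef, -, -, ho, hdvd⟩
  rw [G.slide_o_self, G.slide_o_of_ne f hef.1] at ho
  rw [G.slide_lab_of_ne f hef.1] at hdvd
  have hlab : G.lab f = G.lab (G.bar f) :=
    hna.lab_eq_lab_bar hred ho.symm (hef.lab_bar_dvd_slide_lab.trans hdvd)
  exact LGraph.IsBalancedLoop.not_mobile ⟨ho.symm, hlab⟩ hpos hred hna hmf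

/-- (Lemma 4.3(f)) In a reduced non-ascending positively-labeled graph,
for mobile edges `e, f` with `f ∉ {e, ē}`, the slide of `e` over `f` (to a reduced graph)
followed by a slide of `f` over `e` is impossible. -/
theorem stmt8 {V E : Type} [Finite V] [Finite E] (G : LGraph V E)
    (hpos : G.Positive) (hred : G.Reduced) (hna : G.NonAscending)
    (e f : E) (hme : G.Mobile e) (hmf : G.Mobile f)
    (hfe : f ≠ e) (hfebar : f ≠ G.bar e) :
    ¬ (G.CanSlide e f ∧ (G.slide e f).Reduced ∧ (G.slide e f).CanSlide f e) := by
  rintro ⟨hef, -, hfe'⟩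
  exact stmt8_general G hpos hred hna e f hmf ⟨hef, hfe'⟩
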